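/- There exists a unique r ∈ (0,1) with 2·α(r) + 2·β′(r) + π/3 = 2π, and this r satisfies (7+4√3)r⁴ + (20+12√3)r³ + (6+4√3)r² + (−20−4√3)r + 3 = 0 (numerically r = c₂ ≈ 0.5451510421). -/

import Mathlib

/-!
On `[0, ∞)` both `α` and `β′` are continuous and strictly decreasing, hence so is `F_{ijk}` when
`i` and `j` are not both zero, and it then maps `(0, 1)` onto the interval from `(i + j + k)π/3`
to `iπ + jπ/2 + kπ/3`. For `(i, j, k) = (2, 2, 1)` that interval contains `2π`.

The equation `F_{221}(r) = 2π` says `β′ = 2α′ − π/6`. Taking cosines gives a linear equation for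
`sin α′ = √(r(r + 2)) / (1 + r)` with coefficients in `ℚ(√3, r)`, and squaring removes the root.
-/

/-- The angle `α′(r) = arccos(1/(1+r))`. -/
noncomputable def alpha' (r : ℝ) : ℝ := Real.arccos (1 / (1 + r))

/-- The angle `α(r) = π − 2α′(r)`. -/
noncomputable def alphaAngle (r : ℝ) : ℝ := Real.pi - 2 * alpha' r

/-- The angle `β′(r) = arccos(r/(1+r))`. -/
noncomputable def beta' (r : ℝ) : ℝ := Real.arccos (r / (1 + r))

/-- The angle `β(r) = π − 2β′(r)`. -/
noncomputable def betaAngle (r : ℝ) : ℝ := Real.pi - 2 * beta' r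

/-- `F_{ijk}(r) = i·α(r) + j·β′(r) + k·π/3`. -/
noncomputable def F (i j k : ℕ) (r : ℝ) : ℝ :=
  (i : ℝ) * alphaAngle r + (j : ℝ) * beta' r + (k : ℝ) * (Real.pi / 3)

open Real Set

theorem one_div_one_add_mem_Icc {r : ℝ} (hr : 0 ≤ r) : 1 / (1 + r) ∈ Icc (-1) 1 :=
  Icc_subset_Icc_left (by norm_num)
    (unitInterval.div_mem zero_le_one (by positivity) (by linarith))

theorem div_one_add_mem_Icc {r : ℝ} (hr : 0 ≤ r) : r / (1 + r) ∈ Icc (-1) 1 :=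
  Icc_subset_Icc_left (by norm_num) (unitInterval.div_mem hr (by positivity) (by linarith))

theorem cos_alpha' {r : ℝ} (hr : 0 ≤ r) : cos (alpha' r) = 1 / (1 + r) :=
  cos_arccos (one_div_one_add_mem_Icc hr).1 (one_div_one_add_mem_Icc hr).2

theorem cos_beta' {r : ℝ} (hr : 0 ≤ r) : cos (beta' r) = r / (1 + r) :=
  cos_arccos (div_one_add_mem_Icc hr).1 (div_one_add_mem_Icc hr).2

theorem sin_alpha' {r : ℝ} (hr : 0 ≤ r) : sin (alpha' r) = √(r * (r + 2)) / (1 + r) := by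
  have h : 1 - (1 / (1 + r)) ^ 2 = r * (r + 2) / (1 + r) ^ 2 := by
    field_simp
    ring
  rw [alpha', sin_arccos, h, sqrt_div (by positivity), sqrt_sq (by positivity)]

theorem strictMonoOn_alpha' : StrictMonoOn alpha' (Ici 0) := by
  intro x (hx : 0 ≤ x) y (hy : 0 ≤ y) hxy
  exact strictAntiOn_arccos (one_div_one_add_mem_Icc hy) (one_div_one_add_mem_Icc hx)
    (by gcongr)

theorem strictAntiOn_alphaAngle : StrictAntiOn alphaAngle (Ici 0) := by
  intro x hx y hy hxy
  have := strictMonoOn_alpha' hx hy hxy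
  unfold alphaAngle
  linarith

theorem strictAntiOn_beta' : StrictAntiOn beta' (Ici 0) := by
  intro x (hx : 0 ≤ x) y (hy : 0 ≤ y) hxy
  refine strictAntiOn_arccos (div_one_add_mem_Icc hx) (div_one_add_mem_Icc hy) ?_
  rw [div_lt_div_iff₀ (by positivity) (by positivity)]
  linarith

theorem strictAntiOn_F {i j : ℕ} (hij : i ≠ 0 ∨ j ≠ 0) (k : ℕ) :
    StrictAntiOn (F i j k) (Ici 0) := by
  intro x hx y hy hxy
  have hα := strictAntiOn_alphaAngle hx hy hxy
  have hβ := strictAntiOn_beta' hx hy hxy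
  have h : i * alphaAngle y + j * beta' y < i * alphaAngle x + j * beta' x := by
    rcases hij with hi | hj
    · exact add_lt_add_of_lt_of_le (by gcongr) (by gcongr)
    · exact add_lt_add_of_le_of_lt (by gcongr) (by gcongr)
  exact add_lt_add_left h _

theorem continuousOn_alphaAngle : ContinuousOn alphaAngle (Ici 0) := by
  have h : ∀ x ∈ Ici (0 : ℝ), 1 + x ≠ 0 := fun x (hx : 0 ≤ x) ↦ by positivity
  unfold alphaAngle alpha'
  fun_prop (disch := assumption)

theorem continuousOn_beta' : ContinuousOn beta' (Ici 0) := by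
  have h : ∀ x ∈ Ici (0 : ℝ), 1 + x ≠ 0 := fun x (hx : 0 ≤ x) ↦ by positivity
  unfold beta'
  fun_prop (disch := assumption)

theorem continuousOn_F (i j k : ℕ) : ContinuousOn (F i j k) (Ici 0) :=
  ((continuousOn_alphaAngle.const_mul _).add (continuousOn_beta'.const_mul _)).add
    continuousOn_const

theorem F_zero (i j k : ℕ) : F i j k 0 = i * π + j * (π / 2) + k * (π / 3) := by
  simp [F, alphaAngle, alpha', beta']

theorem F_one (i j k : ℕ) : F i j k 1 = (i + j + k) * (π / 3) := by
  have h : arccos (1 / 2) = π / 3 :=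
    arccos_eq_of_eq_cos (by positivity) (by linarith [pi_pos]) cos_pi_div_three.symm
  rw [F, alphaAngle, alpha', beta', one_add_one_eq_two, h]
  ring

theorem surjOn_F (i j k : ℕ) :
    SurjOn (F i j k) (Ioo 0 1)
      (Ioo ((i + j + k) * (π / 3)) (i * π + j * (π / 2) + k * (π / 3))) := by
  rw [← F_zero, ← F_one]
  exact intermediate_value_Ioo' zero_le_one ((continuousOn_F i j k).mono Icc_subset_Ici_self)

theorem F_two_two_one (r : ℝ) : F 2 2 1 r = 2 * alphaAngle r + 2 * beta' r + π / 3 := by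
  simp [F]

theorem sq_eq_of_two_mul_alpha'_sub_beta'_eq {r θ : ℝ} (hr : 0 ≤ r)
    (h : 2 * alpha' r - beta' r = θ) :
    (r * (1 + r) - cos θ * (1 - 2 * r - r ^ 2)) ^ 2 = 4 * sin θ ^ 2 * (r * (r + 2)) := by
  have hcos : cos (beta' r) = cos (2 * alpha' r - θ) := by rw [← h, sub_sub_cancel]
  rw [cos_sub, cos_two_mul, sin_two_mul, cos_alpha' hr, cos_beta' hr, sin_alpha' hr] at hcos
  have hlin : r * (1 + r) - cos θ * (1 - 2 * r - r ^ 2) = 2 * sin θ * √(r * (r + 2)) := by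
    field_simp at hcos
    linear_combination hcos
  rw [hlin, mul_pow, mul_pow, sq_sqrt (by positivity)]
  norm_num

theorem quartic_eq_zero_of_two_mul_alpha'_sub_beta'_eq_pi_div_six {r : ℝ} (hr : 0 ≤ r)
    (h : 2 * alpha' r - beta' r = π / 6) :
    (7 + 4 * √3) * r ^ 4 + (20 + 12 * √3) * r ^ 3 + (6 + 4 * √3) * r ^ 2 +
      (-20 - 4 * √3) * r + 3 = 0 := by
  have hsq := sq_eq_of_two_mul_alpha'_sub_beta'_eq hr h
  rw [cos_pi_div_six, sin_pi_div_six] at hsq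
  have h3 : √3 ^ 2 = 3 := sq_sqrt (by norm_num)
  linear_combination 4 * hsq - (1 - 2 * r - r ^ 2) ^ 2 * h3

theorem c2_equation_general :
    (∃! r : ℝ, 0 ≤ r ∧ 2 * alphaAngle r + 2 * beta' r + π / 3 = 2 * π) ∧
    ∀ r : ℝ, 0 ≤ r → 2 * alphaAngle r + 2 * beta' r + π / 3 = 2 * π →
      r ∈ Ioo 0 1 ∧
      (7 + 4 * √3) * r ^ 4 + (20 + 12 * √3) * r ^ 3 + (6 + 4 * √3) * r ^ 2 +
        (-20 - 4 * √3) * r + 3 = 0 := by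
  simp only [← F_two_two_one]
  obtain ⟨c, hc, hFc⟩ : 2 * π ∈ F 2 2 1 '' Ioo 0 1 :=
    surjOn_F 2 2 1 (by constructor <;> push_cast <;> linarith [pi_pos])
  have eq_c {x : ℝ} (hx : 0 ≤ x) (hFx : F 2 2 1 x = 2 * π) : x = c :=
    (strictAntiOn_F (.inl two_ne_zero) 1).injOn hx hc.1.le (hFx.trans hFc.symm)
  refine ⟨⟨c, ⟨hc.1.le, hFc⟩, fun x hx ↦ eq_c hx.1 hx.2⟩, fun x hx hFx ↦
    ⟨eq_c hx hFx ▸ hc, quartic_eq_zero_of_two_mul_alpha'_sub_beta'_eq_pi_div_six hx ?_⟩⟩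
  rw [F_two_two_one, alphaAngle] at hFx
  linarith

/-- There is a unique `r ∈ (0,1)` with `2α(r) + 2β′(r) + π/3 = 2π`, and it
satisfies `(7+4√3)r⁴ + (20+12√3)r³ + (6+4√3)r² + (−20−4√3)r + 3 = 0`
(this is `c₂ ≈ 0.5451510421`). -/
theorem c2_equation :
    (∃! r : ℝ, r ∈ Set.Ioo (0 : ℝ) 1 ∧
      2 * alphaAngle r + 2 * beta' r + Real.pi / 3 = 2 * Real.pi) ∧
    ∀ r ∈ Set.Ioo (0 : ℝ) 1,
      2 * alphaAngle r + 2 * beta' r + Real.pi / 3 = 2 * Real.pi →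
      (7 + 4 * Real.sqrt 3) * r ^ 4 + (20 + 12 * Real.sqrt 3) * r ^ 3 +
        (6 + 4 * Real.sqrt 3) * r ^ 2 + (-20 - 4 * Real.sqrt 3) * r + 3 = 0 := by
  obtain ⟨⟨r, ⟨hr, h⟩, huniq⟩, hall⟩ := c2_equation_general
  exact ⟨⟨r, ⟨(hall r hr h).1, h⟩, fun x hx ↦ huniq x ⟨hx.1.1.le, hx.2⟩⟩,
    fun x hx hx' ↦ (hall x hx.1.le hx').2⟩
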